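/- Let n ≥ 5 and let G be the n×n toroidal chess graph. In the game of Cops and Robbers on G with exactly two cops, both knights, and a robber on foot, the robber has a winning strategy; that is, with knight cops and a foot robber, c(G) > 2. -/

import Mathlib

/-!
The robber survives because a knight standing on a vertex `d` different from the robber's vertex
`r` can occupy or attack at most two of the five vertices that the robber may reach in one turn
(his own and its four neighbours). Two knights thus spoil at most four of the five, so whenever the
robber has not been caught he can go to a vertex that no cop can reach on the next turn.
The same count supplies a safe starting vertex: start from any unoccupied vertex and apply it.

The bound of two is `card_blocked_le_two`. For `n ≥ 7` all the coordinate differences involved lie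
in `[-6, 6]`, so congruence mod `n` is equality of integers and a finite check in `ℤ × ℤ`
(`card_blockedInt_le_two`) suffices; `n = 5` and `n = 6` are finite checks on the torus itself.

For the cop number, the argument is run for every `k ≤ 2`, and the set of winning `k` is nonempty
because `n²` cops can occupy every vertex.
-/

/-- Vertices of the `n × n` toroidal chess graph: pairs of coordinates mod `n`. -/
abbrev V (n : ℕ) : Type := ZMod n × ZMod n

/-- "On foot" moves (toroidal grid adjacency): the target differs from the current
vertex by `(±1,0)` or `(0,±1)` mod `n`. -/
def footMove (n : ℕ) (v w : V n) : Prop :=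
  w - v = (1, 0) ∨ w - v = (-1, 0) ∨ w - v = (0, 1) ∨ w - v = (0, -1)

/-- Knight moves: the target differs from the current vertex by `(±1,±2)` or
`(±2,±1)` mod `n`. -/
def knightMove (n : ℕ) (v w : V n) : Prop :=
  w - v = (1, 2) ∨ w - v = (1, -2) ∨ w - v = (-1, 2) ∨ w - v = (-1, -2) ∨
    w - v = (2, 1) ∨ w - v = (2, -1) ∨ w - v = (-2, 1) ∨ w - v = (-2, -1)

/-- One turn of a piece with allowable-move relation `R`: either stay on the current
vertex or move to an allowable vertex. -/
def stayOr {α : Type*} (R : α → α → Prop) (v w : α) : Prop := w = v ∨ R v w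

/-- `CopsWin copMove robMove c r t` holds when, from the position in which the `k`
cops occupy the vertices `c : Fin k → V n` (cop `i` moving by the relation
`copMove i`), the robber (moving by `robMove`) occupies `r`, and it is the cops'
turn iff `t = true`, the cops can force that after finitely many turns some cop
occupies the robber's vertex.  On the cops' turn every cop simultaneously either
stays or makes an allowable move; likewise for the robber on his turn. -/
inductive CopsWin {n k : ℕ} (copMove : Fin k → V n → V n → Prop)
    (robMove : V n → V n → Prop) : (Fin k → V n) → V n → Bool → Prop
  | caught {c : Fin k → V n} {r : V n} {t : Bool} (h : ∃ i, c i = r) :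
      CopsWin copMove robMove c r t
  | copsTurn {c : Fin k → V n} {r : V n} (c' : Fin k → V n)
      (h : ∀ i, stayOr (copMove i) (c i) (c' i))
      (hw : CopsWin copMove robMove c' r false) : CopsWin copMove robMove c r true
  | robTurn {c : Fin k → V n} {r : V n}
      (hw : ∀ r', stayOr robMove r r' → CopsWin copMove robMove c r' true) :
      CopsWin copMove robMove c r false

/-- The `k` cops have a winning strategy: they can choose starting vertices
(repetitions allowed) so that, whatever starting vertex the robber then chooses,
the cops (moving first) can force a capture in finitely many turns. -/
def CopsHaveWinningStrategy {n : ℕ} (k : ℕ) (copMove : Fin k → V n → V n → Prop)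
    (robMove : V n → V n → Prop) : Prop :=
  ∃ c : Fin k → V n, ∀ r : V n, CopsWin copMove robMove c r true

/-- The cop number of the `n × n` toroidal chess graph, for the game in which,
when there are `k` cops, cop `i` moves by the relation `copMove k i` and the
robber moves by `robMove`: the minimum number of cops having a winning strategy. -/
noncomputable def copNumber (n : ℕ) (copMove : ∀ k, Fin k → V n → V n → Prop)
    (robMove : V n → V n → Prop) : ℕ :=
  sInf {k | CopsHaveWinningStrategy k (copMove k) robMove}

/-- The five displacements available to a piece on foot, staying included. -/
def footStep : Fin 5 → ℤ × ℤ := ![(0, 0), (1, 0), (-1, 0), (0, 1), (0, -1)]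

/-- The nine displacements available to a knight, staying included. -/
def knightStep : Fin 9 → ℤ × ℤ :=
  ![(0, 0), (1, 2), (1, -2), (-1, 2), (-1, -2), (2, 1), (2, -1), (-2, 1), (-2, -1)]

/-- Reduction of an integer vector mod `n`. -/
def toTorus (n : ℕ) (z : ℤ × ℤ) : V n := ((z.1 : ZMod n), (z.2 : ZMod n))

lemma stayOr_footMove {n : ℕ} (r : V n) (i : Fin 5) :
    stayOr (footMove n) r (r + toTorus n (footStep i)) := by
  fin_cases i <;> simp [stayOr, footMove, toTorus, footStep]

lemma exists_knightStep {n : ℕ} {v w : V n} (h : stayOr (knightMove n) v w) :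
    ∃ j, w = v + toTorus n (knightStep j) := by
  have key : ∀ j, w - v = toTorus n (knightStep j) → ∃ j, w = v + toTorus n (knightStep j) :=
    fun j hj => ⟨j, by rw [← hj]; abel⟩
  rcases h with h | h | h | h | h | h | h | h | h
  · exact key 0 (by simp [h, toTorus, knightStep, Prod.ext_iff])
  · exact key 1 (by simp [h, toTorus, knightStep])
  · exact key 2 (by simp [h, toTorus, knightStep])
  · exact key 3 (by simp [h, toTorus, knightStep])
  · exact key 4 (by simp [h, toTorus, knightStep])
  · exact key 5 (by simp [h, toTorus, knightStep])
  · exact key 6 (by simp [h, toTorus, knightStep])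
  · exact key 7 (by simp [h, toTorus, knightStep])
  · exact key 8 (by simp [h, toTorus, knightStep])

/-- The foot steps of a robber at the origin that end on a vertex which a knight at `d` occupies
or attacks. -/
def blocked (n : ℕ) (d : V n) : Finset (Fin 5) :=
  Finset.univ.filter fun i => ∃ j, toTorus n (footStep i) = d + toTorus n (knightStep j)

/-- The analogue of `blocked` on the infinite board. -/
def blockedInt (z : ℤ × ℤ) : Finset (Fin 5) :=
  Finset.univ.filter fun i => ∃ j, footStep i = z + knightStep j

/-- A knight on the infinite board, not at the origin, blocks at most two foot steps. Only positions
`footStep i - knightStep j` need checking, since elsewhere nothing is blocked. -/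
lemma card_blockedInt_le_two : ∀ i j, footStep i - knightStep j ≠ 0 →
    (blockedInt (footStep i - knightStep j)).card ≤ 2 := by
  decide +kernel

lemma abs_step_le (i i' : Fin 5) (j j' : Fin 9) :
    |(footStep i' - (footStep i - knightStep j + knightStep j')).1| ≤ 6 ∧
    |(footStep i' - (footStep i - knightStep j + knightStep j')).2| ≤ 6 := by
  revert i i' j j'
  decide +kernel

lemma toTorus_inj_of_small {n : ℕ} (hn : 7 ≤ n) {z w : ℤ × ℤ} (h : toTorus n z = toTorus n w)
    (h₁ : |(z - w).1| ≤ 6) (h₂ : |(z - w).2| ≤ 6) : z = w := by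
  have key : ∀ a b : ℤ, (a : ZMod n) = b → |a - b| ≤ 6 → a = b := by
    intro a b hab hle
    have hdvd : (n : ℤ) ∣ a - b := by
      rw [← ZMod.intCast_zmod_eq_zero_iff_dvd]
      simp [hab]
    have := Int.eq_zero_of_abs_lt_dvd hdvd (by omega)
    omega
  exact Prod.ext (key _ _ (congrArg Prod.fst h) h₁) (key _ _ (congrArg Prod.snd h) h₂)

lemma card_blocked_le_two {n : ℕ} (hn : 5 ≤ n) (d : V n) (hd : d ≠ 0) :
    (blocked n d).card ≤ 2 := by
  rcases Nat.lt_or_ge n 7 with h7 | h7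
  · interval_cases n
    · revert d
      decide +kernel
    · revert d
      decide +kernel
  · rcases (blocked n d).eq_empty_or_nonempty with h0 | ⟨i, hi⟩
    · simp [h0]
    · obtain ⟨j, hj⟩ := (Finset.mem_filter.1 hi).2
      -- One blocked step provides an integer representative of `d` with small coordinates.
      have hz : d = toTorus n (footStep i - knightStep j) := by
        rw [eq_sub_of_add_eq hj.symm]
        simp [toTorus]
      have hne : footStep i - knightStep j ≠ 0 := by
        intro h
        apply hd
        rw [hz, h]
        simp [toTorus]
      refine (Finset.card_le_card ?_).trans (card_blockedInt_le_two i j hne)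
      intro i' hi'
      obtain ⟨j', hj'⟩ := (Finset.mem_filter.1 hi').2
      refine Finset.mem_filter.2 ⟨Finset.mem_univ _, j', ?_⟩
      refine toTorus_inj_of_small h7 ?_ (abs_step_le i i' j j').1 (abs_step_le i i' j j').2
      rw [hj', hz]
      simp [toTorus]

/-- An uncaught robber facing at most two knights has a turn after which no knight can capture
him at once. -/
lemma exists_safe_move {n k : ℕ} (hn : 5 ≤ n) (hk : k ≤ 2) (c : Fin k → V n) (r : V n)
    (hc : ∀ i, c i ≠ r) :
    ∃ r', stayOr (footMove n) r r' ∧ ∀ i, ¬ stayOr (knightMove n) (c i) r' := by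
  have hcard : (Finset.univ.biUnion fun i => blocked n (c i - r)).card < 5 := by
    calc _ ≤ (Finset.univ : Finset (Fin k)).card * 2 :=
          Finset.card_biUnion_le_card_mul _ _ _ fun i _ =>
            card_blocked_le_two hn _ (sub_ne_zero.2 (hc i))
      _ < 5 := by simp; omega
  obtain ⟨s, hs⟩ : ∃ s, s ∉ Finset.univ.biUnion fun i => blocked n (c i - r) := by
    by_contra! h
    rw [Finset.eq_univ_iff_forall.2 h] at hcard
    simp at hcard
  refine ⟨r + toTorus n (footStep s), stayOr_footMove r s, fun i hi => hs ?_⟩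
  obtain ⟨j, hj⟩ := exists_knightStep hi
  refine Finset.mem_biUnion.2 ⟨i, Finset.mem_univ _, Finset.mem_filter.2 ⟨Finset.mem_univ _, j, ?_⟩⟩
  rw [eq_sub_of_add_eq' hj]
  abel

/-- At most two knights can win only from positions where they win at once: some cop can reach the
robber's vertex on the cops' turn, or already occupies it on the robber's turn. -/
lemma capture_of_copsWin {n k : ℕ} (hn : 5 ≤ n) (hk : k ≤ 2) {c : Fin k → V n} {r : V n} {t : Bool}
    (h : CopsWin (fun _ => knightMove n) (footMove n) c r t) :
    (t = true → ∃ i, stayOr (knightMove n) (c i) r) ∧ (t = false → ∃ i, c i = r) := by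
  induction h with
  | caught h =>
    obtain ⟨i, hi⟩ := h
    exact ⟨fun _ => ⟨i, Or.inl hi.symm⟩, fun _ => ⟨i, hi⟩⟩
  | copsTurn c' h _ ih =>
    obtain ⟨i, hi⟩ := ih.2 rfl
    exact ⟨fun _ => ⟨i, hi ▸ h i⟩, by simp⟩
  | @robTurn c r _ ih =>
    refine ⟨by simp, fun _ => ?_⟩
    by_contra! hc
    obtain ⟨r', hr', hsafe⟩ := exists_safe_move hn hk c r hc
    obtain ⟨i, hi⟩ := (ih r' hr').1 rfl
    exact hsafe i hi

lemma not_copsHaveWinningStrategy {n k : ℕ} (hn : 5 ≤ n) (hk : k ≤ 2) :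
    ¬ CopsHaveWinningStrategy k (fun _ : Fin k => knightMove n) (footMove n) := by
  rintro ⟨c, hc⟩
  have : NeZero n := ⟨by omega⟩
  obtain ⟨r, hr⟩ : ∃ r, ∀ i, c i ≠ r := by
    by_contra! h
    have hle := Fintype.card_le_of_surjective c h
    simp only [Fintype.card_prod, ZMod.card, Fintype.card_fin] at hle
    nlinarith
  obtain ⟨r', -, hsafe⟩ := exists_safe_move hn hk c r hr
  obtain ⟨i, hi⟩ := (capture_of_copsWin hn hk (hc r')).1 rfl
  exact hsafe i hi

/-- For `n ≥ 5`, on the `n × n` toroidal chess graph with exactly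
two cops, both knights, and a robber on foot, the robber has a winning strategy
(the two cops do not); that is, with knight cops and a foot robber, `c(G) > 2`. -/
theorem two_knight_cops_lose_to_foot_robber (n : ℕ) (hn : 5 ≤ n) :
    ¬ CopsHaveWinningStrategy 2 (fun _ : Fin 2 => knightMove n) (footMove n) ∧
    2 < copNumber n (fun _ _ => knightMove n) (footMove n) := by
  refine ⟨not_copsHaveWinningStrategy hn le_rfl, ?_⟩
  have : NeZero n := ⟨by omega⟩
  -- Without nonemptiness the infimum would take the junk value `0`.
  have hne : {k | CopsHaveWinningStrategy k (fun _ : Fin k => knightMove n)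
      (footMove n)}.Nonempty :=
    ⟨Fintype.card (V n), (Fintype.equivFin (V n)).symm,
      fun r => .caught ⟨Fintype.equivFin (V n) r, by simp⟩⟩
  by_contra! hle
  exact not_copsHaveWinningStrategy hn hle (Nat.sInf_mem hne)
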